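/- Let X be a real Banach space, let E be a finite-dimensional linear subspace of X, and let F be a closed linear subspace of X that is simultaneously approximatively compact. Then E + F is simultaneously approximatively compact. -/

import Mathlib

open Filter Topology Pointwise

variable {X : Type*} [NormedAddCommGroup X] [NormedSpace ℝ X]

/-- `simSup A y = sup_{a ∈ A} ‖a - y‖`. -/
noncomputable def simSup (A : Set X) (y : X) : ℝ := ⨆ a : A, ‖(a : X) - y‖

/-- `simDist A C = inf_{y ∈ C} sup_{a ∈ A} ‖a - y‖`. -/
noncomputable def simDist (A C : Set X) : ℝ := ⨅ y : C, simSup A (y : X)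

/-- The set of best simultaneous approximations `P_C(A)`. -/
def simBest (A C : Set X) : Set X := {y | y ∈ C ∧ simSup A y = simDist A C}

/-- The set `P_C(A, δ)`. -/
def simBestApprox (A C : Set X) (δ : ℝ) : Set X :=
  {y | y ∈ C ∧ simSup A y < simDist A C + δ}

/-- `C` is simultaneously proximinal. -/
def SimProximinal (C : Set X) : Prop :=
  ∀ A : Set X, A.Nonempty → Bornology.IsBounded A → (simBest A C).Nonempty

/-- `y` is a minimizing sequence in `C` for `A`. -/
def IsMinimizing (A C : Set X) (y : ℕ → X) : Prop :=
  (∀ n, y n ∈ C) ∧ Tendsto (fun n => simSup A (y n)) atTop (𝓝 (simDist A C))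

/-- Weak convergence of a sequence. -/
def WeakTendsto (y : ℕ → X) (c : X) : Prop :=
  ∀ f : X →L[ℝ] ℝ, Tendsto (fun n => f (y n)) atTop (𝓝 (f c))

/-- `C` is simultaneously approximatively compact. -/
def SimApproxCompact (C : Set X) : Prop :=
  ∀ A : Set X, A.Nonempty → Bornology.IsBounded A → ∀ y : ℕ → X, IsMinimizing A C y →
    ∃ c ∈ C, ∃ φ : ℕ → ℕ, StrictMono φ ∧ Tendsto (y ∘ φ) atTop (𝓝 c)

/-- `C` is simultaneously approximatively weakly compact. -/
def SimApproxWeakCompact (C : Set X) : Prop :=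
  ∀ A : Set X, A.Nonempty → Bornology.IsBounded A → ∀ y : ℕ → X, IsMinimizing A C y →
    ∃ c ∈ C, ∃ φ : ℕ → ℕ, StrictMono φ ∧ WeakTendsto (y ∘ φ) c

/-- `C` is simultaneously strongly proximinal. -/
def SimStronglyProximinal (C : Set X) : Prop :=
  SimProximinal C ∧ ∀ A : Set X, A.Nonempty → Bornology.IsBounded A → ∀ ε > (0 : ℝ),
    ∃ δ > (0 : ℝ), simBestApprox A C δ ⊆ simBest A C + Metric.closedBall (0 : X) ε

/-- `C` is simultaneously weakly strongly proximinal. -/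
def SimWeakStronglyProximinal (C : Set X) : Prop :=
  SimProximinal C ∧ ∀ A : Set X, A.Nonempty → Bornology.IsBounded A →
    ∀ V : Set X, V ∈ 𝓝 (0 : WeakSpace ℝ X) → ∃ δ > (0 : ℝ),
      simBestApprox A C δ ⊆ simBest A C + V

/-!
Let `y` be a minimizing sequence for `A` in `E + F`. It is bounded, and `F` is closed, so its image
in the normed space `X ⧸ F` is a bounded sequence in the finite-dimensional image of `E`; along a
subsequence it converges to the class of some `e ∈ E`. The quotient norm is the distance to `F`, so
this subsequence of `y` is asymptotic to a sequence `z` in the translate `e + F`.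

As `simSup A` is 1-Lipschitz, `simSup A (z n)` still tends to `simDist A (E + F)`. This is at most
`simDist A (e + F)`, so `z` is minimizing for `A` in `e + F`. That set inherits simultaneous
approximative compactness from `F`, so a subsequence of `z` converges, and so does the
corresponding one of `y`. Working in the quotient means that `y` never has to be split into a
bounded part in `E` and one in `F`.
-/

section SimApproxCompact

variable {V : Type*} [NormedAddCommGroup V] {A C D : Set V} {y z : ℕ → V}

theorem simSup_nonneg (A : Set V) (y : V) : 0 ≤ simSup A y :=
  Real.iSup_nonneg fun _ => norm_nonneg _

theorem norm_sub_le_simSup (hA : Bornology.IsBounded A) {a : V} (ha : a ∈ A) (y : V) :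
    ‖a - y‖ ≤ simSup A y := by
  obtain ⟨R, hR⟩ := hA.exists_norm_le
  refine le_ciSup (f := fun a : A => ‖(a : V) - y‖) ⟨R + ‖y‖, ?_⟩ ⟨a, ha⟩
  rintro _ ⟨b, rfl⟩
  exact (norm_sub_le _ _).trans (by gcongr; exact hR b b.2)

theorem lipschitzWith_simSup (hA : Bornology.IsBounded A) : LipschitzWith 1 (simSup A) := by
  refine LipschitzWith.of_le_add fun y z =>
    Real.iSup_le (fun a => ?_) (add_nonneg (simSup_nonneg A z) dist_nonneg)
  calc ‖(a : V) - y‖ ≤ ‖(a : V) - z‖ + ‖z - y‖ := norm_sub_le_norm_sub_add_norm_sub _ _ _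
    _ ≤ simSup A z + dist y z := by
      rw [dist_comm, dist_eq_norm]
      gcongr
      exact norm_sub_le_simSup hA a.2 z

theorem simSup_singleton (x y : V) : simSup {x} y = ‖x - y‖ :=
  ciSup_unique

theorem simSup_vadd (e : V) (A : Set V) (y : V) : simSup (e +ᵥ A) (e +ᵥ y) = simSup A y :=
  (((AddAction.toPerm e).image A).iSup_congr fun a => by simp).symm

theorem simDist_le_simSup (A : Set V) {y : V} (hy : y ∈ C) : simDist A C ≤ simSup A y := by
  refine ciInf_le (f := fun y : C => simSup A (y : V)) ⟨0, ?_⟩ ⟨y, hy⟩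
  rintro _ ⟨z, rfl⟩
  exact simSup_nonneg A z

theorem simDist_anti (A : Set V) (hDC : D ⊆ C) (hD : D.Nonempty) : simDist A C ≤ simDist A D :=
  have := hD.to_subtype
  le_ciInf fun y => simDist_le_simSup A (hDC y.2)

theorem simDist_vadd (e : V) (A C : Set V) : simDist (e +ᵥ A) (e +ᵥ C) = simDist A C :=
  (((AddAction.toPerm e).image C).iInf_congr fun y => simSup_vadd e A y).symm

theorem isMinimizing_vadd_iff (e : V) :
    IsMinimizing (e +ᵥ A) (e +ᵥ C) (fun n => e +ᵥ y n) ↔ IsMinimizing A C y := by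
  simp only [IsMinimizing, Set.vadd_mem_vadd_set_iff, simSup_vadd, simDist_vadd]

theorem IsMinimizing.comp_tendsto (hy : IsMinimizing A C y) {φ : ℕ → ℕ}
    (hφ : Tendsto φ atTop atTop) : IsMinimizing A C (y ∘ φ) :=
  ⟨fun n => hy.1 (φ n), hy.2.comp hφ⟩

theorem IsMinimizing.isBounded_range (hy : IsMinimizing A C y) (hne : A.Nonempty)
    (hA : Bornology.IsBounded A) : Bornology.IsBounded (Set.range y) := by
  obtain ⟨a, ha⟩ := hne
  obtain ⟨S, hS⟩ := hy.2.bddAbove_range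
  refine Metric.isBounded_closedBall.subset (Set.range_subset_iff.2 fun n => ?_ :
    Set.range y ⊆ Metric.closedBall a S)
  rw [Metric.mem_closedBall, dist_comm, dist_eq_norm]
  exact (norm_sub_le_simSup hA ha (y n)).trans (hS ⟨n, rfl⟩)

theorem IsMinimizing.congr_dist (hy : IsMinimizing A C y) (hA : Bornology.IsBounded A)
    (hDC : D ⊆ C) (hz : ∀ n, z n ∈ D) (hyz : Tendsto (fun n => dist (y n) (z n)) atTop (𝓝 0)) :
    IsMinimizing A D z := by
  have hsup : Tendsto (fun n => simSup A (z n)) atTop (𝓝 (simDist A C)) := by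
    refine hy.2.congr_dist (squeeze_zero (fun _ => dist_nonneg) (fun n => ?_) hyz)
    simpa using (lipschitzWith_simSup hA).dist_le_mul (y n) (z n)
  have hdist : simDist A D = simDist A C :=
    le_antisymm (ge_of_tendsto' hsup fun n => simDist_le_simSup A (hz n))
      (simDist_anti A hDC ⟨z 0, hz 0⟩)
  exact ⟨hz, hdist ▸ hsup⟩

theorem SimApproxCompact.isClosed (hC : SimApproxCompact C) : IsClosed C := by
  refine isClosed_of_closure_subset fun x hx => ?_
  obtain ⟨y, hyC, hyx⟩ := mem_closure_iff_seq_limit.1 hx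
  have hsup : Tendsto (fun n => simSup {x} (y n)) atTop (𝓝 0) := by
    simpa only [simSup_singleton, norm_sub_rev] using tendsto_iff_norm_sub_tendsto_zero.1 hyx
  have hdist : simDist {x} C = 0 :=
    le_antisymm (ge_of_tendsto' hsup fun n => simDist_le_simSup {x} (hyC n))
      (Real.iInf_nonneg fun c => simSup_nonneg {x} c)
  obtain ⟨c, hc, φ, hφ, hyc⟩ :=
    hC {x} (Set.singleton_nonempty x) Bornology.isBounded_singleton y ⟨hyC, hdist ▸ hsup⟩
  rwa [tendsto_nhds_unique (hyx.comp hφ.tendsto_atTop) hyc]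

theorem SimApproxCompact.vadd (hC : SimApproxCompact C) (e : V) : SimApproxCompact (e +ᵥ C) := by
  intro A hne hA y hy
  have hy' : IsMinimizing (-e +ᵥ A) C (fun n => -e +ᵥ y n) := by
    simpa only [neg_vadd_vadd] using (isMinimizing_vadd_iff (-e)).2 hy
  obtain ⟨c, hc, φ, hφ, hlim⟩ := hC _ hne.vadd_set (hA.vadd (-e)) _ hy'
  refine ⟨e +ᵥ c, Set.vadd_mem_vadd_set hc, φ, hφ, ?_⟩
  simpa only [Function.comp_def, vadd_neg_vadd] using hlim.const_vadd e

theorem simApproxCompact_of_exists_subseq_asymptotic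
    (h : ∀ y : ℕ → V, (∀ n, y n ∈ C) → Bornology.IsBounded (Set.range y) →
      ∃ D ⊆ C, SimApproxCompact D ∧ ∃ z : ℕ → V, (∀ n, z n ∈ D) ∧ ∃ φ : ℕ → ℕ, StrictMono φ ∧
        Tendsto (fun n => dist (y (φ n)) (z n)) atTop (𝓝 0)) :
    SimApproxCompact C := by
  intro A hne hA y hy
  obtain ⟨D, hDC, hD, z, hz, φ, hφ, hyz⟩ := h y hy.1 (hy.isBounded_range hne hA)
  have hzmin : IsMinimizing A D z := (hy.comp_tendsto hφ.tendsto_atTop).congr_dist hA hDC hz hyz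
  obtain ⟨c, hc, ψ, hψ, hzc⟩ := hD A hne hA z hzmin
  have hzy : Tendsto (fun n => dist (z (ψ n)) (y (φ (ψ n)))) atTop (𝓝 0) := by
    simpa only [Function.comp_def, dist_comm] using hyz.comp hψ.tendsto_atTop
  exact ⟨c, hDC hc, φ ∘ ψ, hφ.comp hψ, hzc.congr_dist hzy⟩

end SimApproxCompact

theorem exists_seq_mem_tendsto_dist_of_tendsto_infDist {α : Type*} [PseudoMetricSpace α]
    {s : Set α} (hs : s.Nonempty) {u : ℕ → α}
    (hu : Tendsto (fun n => Metric.infDist (u n) s) atTop (𝓝 0)) :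
    ∃ z : ℕ → α, (∀ n, z n ∈ s) ∧ Tendsto (fun n => dist (u n) (z n)) atTop (𝓝 0) := by
  have hnear (n : ℕ) : ∃ x ∈ s, dist (u n) x < Metric.infDist (u n) s + 1 / ((n : ℝ) + 1) :=
    (Metric.infDist_lt_iff hs).1 (lt_add_of_pos_right _ Nat.one_div_pos_of_nat)
  choose z hz hdist using hnear
  refine ⟨z, hz, squeeze_zero (fun _ => dist_nonneg) (fun n => (hdist n).le) ?_⟩
  simpa only [add_zero] using hu.add tendsto_one_div_add_atTop_nhds_zero_nat

theorem infDist_vadd_addSubgroup {G : Type*} [SeminormedAddCommGroup G] (S : AddSubgroup G)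
    (x e : G) : Metric.infDist x (e +ᵥ (S : Set G)) = ‖(x : G ⧸ S) - (e : G ⧸ S)‖ := by
  rw [← QuotientAddGroup.mk_sub, QuotientAddGroup.norm_mk,
    ← Metric.infDist_image (isometry_vadd G e) (x := x - e), Set.image_vadd, vadd_eq_add,
    add_sub_cancel]

section Submodule

variable {𝕜 V : Type*} [NontriviallyNormedField 𝕜] [LocallyCompactSpace 𝕜]
  [NormedAddCommGroup V] [NormedSpace 𝕜 V]

theorem exists_subseq_tendsto_mkQ (E F : Submodule 𝕜 V) [FiniteDimensional 𝕜 E]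
    (hF : IsClosed (F : Set V)) {y : ℕ → V} (hy : ∀ n, y n ∈ (E : Set V) + (F : Set V))
    (hbdd : Bornology.IsBounded (Set.range y)) :
    ∃ e ∈ E, ∃ φ : ℕ → ℕ, StrictMono φ ∧
      Tendsto (fun n => F.mkQ (y (φ n))) atTop (𝓝 (F.mkQ e)) := by
  have : IsClosed (F : Set V) := hF
  have : ProperSpace (E.map F.mkQ) := FiniteDimensional.proper 𝕜 _
  have hmem (n : ℕ) : F.mkQ (y n) ∈ E.map F.mkQ := by
    obtain ⟨u, hu, v, hv, huv⟩ := Set.mem_add.1 (hy n)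
    have hv0 : F.mkQ v = 0 := (Submodule.Quotient.mk_eq_zero F).2 hv
    exact ⟨u, hu, by rw [← huv, map_add, hv0, add_zero]⟩
  obtain ⟨R, hR⟩ := hbdd.exists_norm_le
  have hball (n : ℕ) : (⟨F.mkQ (y n), hmem n⟩ : E.map F.mkQ) ∈ Metric.closedBall 0 R :=
    mem_closedBall_zero_iff.2
      ((Submodule.Quotient.norm_mk_le F (y n)).trans (hR _ (Set.mem_range_self n)))
  obtain ⟨⟨_, e, he, rfl⟩, -, φ, hφ, hlim⟩ :=
    tendsto_subseq_of_bounded Metric.isBounded_closedBall hball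
  exact ⟨e, he, φ, hφ, (continuous_subtype_val.tendsto _).comp hlim⟩

theorem exists_subseq_asymptotic_vadd (E F : Submodule 𝕜 V) [FiniteDimensional 𝕜 E]
    (hF : IsClosed (F : Set V)) {y : ℕ → V} (hy : ∀ n, y n ∈ (E : Set V) + (F : Set V))
    (hbdd : Bornology.IsBounded (Set.range y)) :
    ∃ e ∈ E, ∃ z : ℕ → V, (∀ n, z n ∈ e +ᵥ (F : Set V)) ∧ ∃ φ : ℕ → ℕ, StrictMono φ ∧
      Tendsto (fun n => dist (y (φ n)) (z n)) atTop (𝓝 0) := by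
  obtain ⟨e, he, φ, hφ, hlim⟩ := exists_subseq_tendsto_mkQ E F hF hy hbdd
  have hinf : Tendsto (fun n => Metric.infDist (y (φ n)) (e +ᵥ (F : Set V))) atTop (𝓝 0) :=
    (tendsto_iff_norm_sub_tendsto_zero.1 hlim).congr fun n =>
      (infDist_vadd_addSubgroup F.toAddSubgroup (y (φ n)) e).symm
  have hne : (e +ᵥ (F : Set V)).Nonempty := F.nonempty.vadd_set
  obtain ⟨z, hz, hyz⟩ := exists_seq_mem_tendsto_dist_of_tendsto_infDist hne hinf
  exact ⟨e, he, z, hz, φ, hφ, hyz⟩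

theorem findim_add_simApproxCompact_subspace_general (E F : Submodule 𝕜 V)
    [FiniteDimensional 𝕜 E] (hF : SimApproxCompact (F : Set V)) :
    SimApproxCompact ((E : Set V) + (F : Set V)) := by
  refine simApproxCompact_of_exists_subseq_asymptotic fun y hy hbdd => ?_
  obtain ⟨e, he, hasymp⟩ := exists_subseq_asymptotic_vadd E F hF.isClosed hy hbdd
  exact ⟨e +ᵥ (F : Set V), Set.vadd_set_subset_add he, hF.vadd e, hasymp⟩

end Submodule

/-- The sum of a finite-dimensional subspace and a simultaneously approximatively compact
closed subspace is simultaneously approximatively compact. -/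
theorem findim_add_simApproxCompact_subspace [CompleteSpace X]
    (E F : Subspace ℝ X) [FiniteDimensional ℝ E] (hF : IsClosed (F : Set X))
    (hFac : SimApproxCompact (F : Set X)) :
    SimApproxCompact ((E : Set X) + (F : Set X)) :=
  findim_add_simApproxCompact_subspace_general E F hFac
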